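/- arXiv:math/0103060 — 2 statements merged into one kernel-verified Lean document; each statement's English description precedes it below -/
import Mathlib

section
/- Suppose a, b ∈ F^× satisfy b + b^{−1} = q(i) for some i ∈ I. If a^{−2}(ab−1)²(ab^{−1}−1)² · ( a^{−2}(ab−1)²(ab^{−1}−1)² − ξ²a^{−1}b^{−1}(ab−1)² − ξ²a^{−1}b(ab^{−1}−1)² ) = 0, then a + a^{−1} = q(j) for some j ∈ I with |i − j| ≤ 1. -/
set_option maxHeartbeats 1000000

namespace HC

/-- Generators of the affine Hecke–Clifford superalgebra `H_n`. -/
inductive Gen (n : ℕ) : Type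
  | X : Fin n → Gen n
  | Xinv : Fin n → Gen n
  | C : Fin n → Gen n
  | T : Fin (n - 1) → Gen n

/-- The node `i` of `Fin n`, for `i : Fin (n-1)` (1-based: the node `i`). -/
def lo {n : ℕ} (i : Fin (n - 1)) : Fin n :=
  ⟨i.val, by have := i.isLt; omega⟩

/-- The node `i+1` of `Fin n`, for `i : Fin (n-1)`. -/
def hi {n : ℕ} (i : Fin (n - 1)) : Fin n :=
  ⟨i.val + 1, by have := i.isLt; omega⟩

variable (F : Type) [Field F]

/-- The free algebra on the generators. -/
abbrev FA (n : ℕ) : Type := FreeAlgebra F (Gen n)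

noncomputable def fx {n : ℕ} (i : Fin n) : FA F n := FreeAlgebra.ι F (Gen.X i)
noncomputable def fxinv {n : ℕ} (i : Fin n) : FA F n := FreeAlgebra.ι F (Gen.Xinv i)
noncomputable def fc {n : ℕ} (i : Fin n) : FA F n := FreeAlgebra.ι F (Gen.C i)
noncomputable def ft {n : ℕ} (i : Fin (n - 1)) : FA F n := FreeAlgebra.ι F (Gen.T i)

/-- The defining relations of the affine Hecke–Clifford superalgebra, with parameter
`q` and `ξ = q - q⁻¹`. -/
inductive Rel (q : F) (n : ℕ) : FA F n → FA F n → Prop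
  | XXinv (i : Fin n) : Rel q n (fx F i * fxinv F i) 1
  | XinvX (i : Fin n) : Rel q n (fxinv F i * fx F i) 1
  | XX (i j : Fin n) : Rel q n (fx F i * fx F j) (fx F j * fx F i)
  | XiXi (i j : Fin n) : Rel q n (fxinv F i * fxinv F j) (fxinv F j * fxinv F i)
  | XXi (i j : Fin n) (h : i ≠ j) : Rel q n (fx F i * fxinv F j) (fxinv F j * fx F i)
  | CC (i : Fin n) : Rel q n (fc F i * fc F i) 1
  | Canti (i j : Fin n) (h : i ≠ j) : Rel q n (fc F i * fc F j) (-(fc F j * fc F i))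
  | CX (i : Fin n) : Rel q n (fc F i * fx F i) (fxinv F i * fc F i)
  | CXi (i : Fin n) : Rel q n (fc F i * fxinv F i) (fx F i * fc F i)
  | CXo (i j : Fin n) (h : i ≠ j) : Rel q n (fc F i * fx F j) (fx F j * fc F i)
  | CXio (i j : Fin n) (h : i ≠ j) : Rel q n (fc F i * fxinv F j) (fxinv F j * fc F i)
  | Tquad (i : Fin (n - 1)) : Rel q n (ft F i * ft F i) ((q - q⁻¹) • ft F i + 1)
  | Tbraid (i j : Fin (n - 1)) (h : (j : ℕ) = (i : ℕ) + 1) :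
      Rel q n (ft F i * ft F j * ft F i) (ft F j * ft F i * ft F j)
  | TTfar (i j : Fin (n - 1)) (h : (i : ℕ) + 1 < (j : ℕ)) :
      Rel q n (ft F i * ft F j) (ft F j * ft F i)
  | TC (i : Fin (n - 1)) : Rel q n (ft F i * fc F (lo i)) (fc F (hi i) * ft F i)
  | TCo (i : Fin (n - 1)) (j : Fin n) (h1 : j ≠ lo i) (h2 : j ≠ hi i) :
      Rel q n (ft F i * fc F j) (fc F j * ft F i)
  | TXo (i : Fin (n - 1)) (j : Fin n) (h1 : j ≠ lo i) (h2 : j ≠ hi i) :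
      Rel q n (ft F i * fx F j) (fx F j * ft F i)
  | TXio (i : Fin (n - 1)) (j : Fin n) (h1 : j ≠ lo i) (h2 : j ≠ hi i) :
      Rel q n (ft F i * fxinv F j) (fxinv F j * ft F i)
  | cross (i : Fin (n - 1)) :
      Rel q n ((ft F i + (q - q⁻¹) • (fc F (lo i) * fc F (hi i))) * fx F (lo i) * ft F i)
        (fx F (hi i))

/-- The affine Hecke–Clifford superalgebra `H_n` over `F` with parameter `q`. -/
abbrev H (q : F) (n : ℕ) : Type := RingQuot (Rel F q n)

noncomputable def X (q : F) {n : ℕ} (i : Fin n) : H F q n :=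
  RingQuot.mkAlgHom F (Rel F q n) (fx F i)

noncomputable def Xinv (q : F) {n : ℕ} (i : Fin n) : H F q n :=
  RingQuot.mkAlgHom F (Rel F q n) (fxinv F i)

noncomputable def C (q : F) {n : ℕ} (i : Fin n) : H F q n :=
  RingQuot.mkAlgHom F (Rel F q n) (fc F i)

noncomputable def T (q : F) {n : ℕ} (i : Fin (n - 1)) : H F q n :=
  RingQuot.mkAlgHom F (Rel F q n) (ft F i)

/-- `q` is either a primitive root of unity of odd order (including `q = 1`)
or not a root of unity at all (and `q ≠ 0`). -/
def GoodParam (q : F) : Prop :=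
  q ≠ 0 ∧ ((∃ m : ℕ, Odd m ∧ IsPrimitiveRoot q m) ∨ ∀ m : ℕ, 0 < m → q ^ m ≠ 1)

/-- `X_i^a` for an integer exponent `a ∈ ℤ`. -/
noncomputable def XZ (q : F) {n : ℕ} (i : Fin n) (a : ℤ) : H F q n :=
  if 0 ≤ a then X F q i ^ a.toNat else Xinv F q i ^ (-a).toNat

/-- The monomial `X^α = X_1^{α_1} ⋯ X_n^{α_n}` for `α ∈ ℤ^n`. -/
noncomputable def Xmon (q : F) {n : ℕ} (α : Fin n → ℤ) : H F q n :=
  ((List.finRange n).map fun i => XZ F q i (α i)).prod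

/-- The monomial `C^β = C_1^{β_1} ⋯ C_n^{β_n}` for `β ∈ {0,1}^n`. -/
noncomputable def Cmon (q : F) {n : ℕ} (β : Fin n → Bool) : H F q n :=
  ((List.finRange n).map fun i => if β i then C F q i else 1).prod

/-- The basic transposition `s_i = (i, i+1)` of `S_n`. -/
def s {n : ℕ} (i : Fin (n - 1)) : Equiv.Perm (Fin n) := Equiv.swap (lo i) (hi i)

/-- The Coxeter length (number of inversions) of a permutation of `Fin n`. -/
def len {n : ℕ} (w : Equiv.Perm (Fin n)) : ℕ :=
  ((Finset.univ : Finset (Fin n × Fin n)).filter fun p => p.1 < p.2 ∧ w p.2 < w p.1).card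

/-- `Tw` is the family of standard basis elements `T_w`, `w ∈ S_n`: it satisfies
`T_1 = 1`, `T_{s_i} = T_i`, and `T_{s_i w} = T_i T_w` whenever `ℓ(s_i w) = ℓ(w) + 1`.
These conditions determine the family uniquely. -/
def IsTFam (q : F) {n : ℕ} (Tw : Equiv.Perm (Fin n) → H F q n) : Prop :=
  Tw 1 = 1 ∧ (∀ i : Fin (n - 1), Tw (s i) = T F q i) ∧
    ∀ (i : Fin (n - 1)) (w : Equiv.Perm (Fin n)),
      len (s i * w) = len w + 1 → Tw (s i * w) = T F q i * Tw w

/-- `h` is the quantum characteristic of `q`:  the smallest positive integer with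
`q^{1-h} + q^{3-h} + ⋯ + q^{h-1} = 0`. -/
def qcharEq (q : F) (h : ℕ) : Prop :=
  0 < h ∧ (∑ k ∈ Finset.range h, q ^ (1 - (h : ℤ) + 2 * (k : ℤ))) = 0 ∧
    ∀ h' : ℕ, 0 < h' → h' < h →
      (∑ k ∈ Finset.range h', q ^ (1 - (h' : ℤ) + 2 * (k : ℤ))) ≠ 0

/-- `i ∈ I = {0, 1, …, ℓ}` where `ℓ = (h-1)/2` (no condition if the quantum
characteristic is infinite). -/
def memI (q : F) (i : ℕ) : Prop := ∀ h : ℕ, qcharEq F q h → 2 * i + 1 ≤ h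

/-- `q(i) = 2(q^{2i+1} + q^{-2i-1})/(q + q⁻¹)`. -/
noncomputable def qres (q : F) (i : ℕ) : F :=
  2 * (q ^ (2 * i + 1) + q⁻¹ ^ (2 * i + 1)) / (q + q⁻¹)

/-- Index of the block containing position `k` (0-based), for a composition given as a
list of parts. -/
def blk : List ℕ → ℕ → ℕ
  | [], _ => 0
  | a :: rest, k => if k < a then 0 else blk rest (k - a) + 1

/-- Membership in the Young subgroup `S_μ ⊆ S_n`. -/
def InYoung {n : ℕ} (μ : List ℕ) (w : Equiv.Perm (Fin n)) : Prop :=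
  ∀ k : Fin n, blk μ (w k).val = blk μ k.val

/-- `μ` is a composition of `n`. -/
def IsComposition (μ : List ℕ) (n : ℕ) : Prop := (∀ a ∈ μ, 0 < a) ∧ μ.sum = n

/-- The parabolic subalgebra generated by all `X_i^{±1}`, `C_i`, and the `T_j` with
`j` in a set `J` of admissible indices. -/
def parabolicJ (q : F) {n : ℕ} (J : Set (Fin (n - 1))) : Subalgebra F (H F q n) :=
  Algebra.adjoin F
    ((Set.range fun i : Fin n => X F q i) ∪ (Set.range fun i : Fin n => Xinv F q i) ∪
      (Set.range fun i : Fin n => C F q i) ∪ {h | ∃ j ∈ J, h = T F q j})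

/-- The parabolic subalgebra `H_μ` for a composition `μ`. -/
def parabolicC (q : F) {n : ℕ} (μ : List ℕ) : Subalgebra F (H F q n) :=
  parabolicJ F q {j | InYoung μ (s j)}

/-- The classical parabolic subalgebra `H^cl_μ`, generated by the `T_j` with `s_j ∈ S_μ`. -/
def clparC (q : F) {n : ℕ} (μ : List ℕ) : Subalgebra F (H F q n) :=
  Algebra.adjoin F {h | ∃ j : Fin (n - 1), InYoung μ (s j) ∧ h = T F q j}

/-- The finite Hecke–Clifford subalgebra `H^fn_n`, generated by all `C_i` and `T_j`. -/
def Hfin (q : F) (n : ℕ) : Subalgebra F (H F q n) :=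
  Algebra.adjoin F
    ((Set.range fun i : Fin n => C F q i) ∪ {h | ∃ j : Fin (n - 1), h = T F q j})

/-- `x` is a minimal length `(S_μ, S_ν)`-double coset representative. -/
def IsMinDC {n : ℕ} (μ ν : List ℕ) (x : Equiv.Perm (Fin n)) : Prop :=
  ∀ u v : Equiv.Perm (Fin n), InYoung μ u → InYoung ν v → len x ≤ len (u * x * v)

/-- `w ∈ S_μ x S_ν`. -/
def InDC {n : ℕ} (μ ν : List ℕ) (x w : Equiv.Perm (Fin n)) : Prop :=
  ∃ u v : Equiv.Perm (Fin n), InYoung μ u ∧ InYoung ν v ∧ w = u * x * v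

/-- A covering step in the Bruhat order: multiplication by a reflection increasing length. -/
def BruhatStep {n : ℕ} (v w : Equiv.Perm (Fin n)) : Prop :=
  ∃ a b : Fin n, a ≠ b ∧ w = Equiv.swap a b * v ∧ len v < len w

/-- The Bruhat order on `S_n`. -/
def BruhatLE {n : ℕ} : Equiv.Perm (Fin n) → Equiv.Perm (Fin n) → Prop :=
  Relation.ReflTransGen BruhatStep

/-- The space of `A`-equivariant linear maps between two representations of the
`F`-algebra `A`. -/
def eqvHoms {A : Type} [Ring A] [Algebra F A] {M N : Type}
    [AddCommGroup M] [Module F M] [AddCommGroup N] [Module F N]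
    (ρM : A →ₐ[F] Module.End F M) (ρN : A →ₐ[F] Module.End F N) :
    Submodule F (M →ₗ[F] N) where
  carrier := {f | ∀ (x : A) (m : M), f (ρM x m) = ρN x (f m)}
  add_mem' := by
    intro f g hf hg x m
    simp only [LinearMap.add_apply, hf x m, hg x m, map_add]
  zero_mem' := by
    intro x m
    simp only [LinearMap.zero_apply, map_zero]
  smul_mem' := by
    intro c f hf x m
    simp only [LinearMap.smul_apply, hf x m, map_smul]

/-- `(E, ρE, ι)` is the module induced along the algebra morphism `φ : B →ₐ A` from
the `B`-representation `(M, ρ)`, i.e. `E = A ⊗_B M`, characterized by its universal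
property. -/
def IsInducedAlong {A B : Type} [Ring A] [Ring B] [Algebra F A] [Algebra F B]
    (φ : B →ₐ[F] A) {M : Type} [AddCommGroup M] [Module F M]
    (ρ : B →ₐ[F] Module.End F M) {E : Type} [AddCommGroup E] [Module F E]
    (ρE : A →ₐ[F] Module.End F E) (ι : M →ₗ[F] E) : Prop :=
  (∀ (b : B) (m : M), ι (ρ b m) = ρE (φ b) (ι m)) ∧
    ∀ (P : Type) [AddCommGroup P] [Module F P],
      ∀ (ρP : A →ₐ[F] Module.End F P) (f : M →ₗ[F] P),
        (∀ (b : B) (m : M), f (ρ b m) = ρP (φ b) (f m)) →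
        ∃! g : E →ₗ[F] P,
          (∀ (x : A) (e : E), g (ρE x e) = ρP x (g e)) ∧ ∀ m : M, g (ι m) = f m

/-- `δ` is the grading automorphism of the superalgebra `H_n`
(identity on even generators, `-1` on the odd generators `C_i`). -/
def IsGradingAut (q : F) {n : ℕ} (δ : H F q n →ₐ[F] H F q n) : Prop :=
  (∀ i : Fin n, δ (X F q i) = X F q i) ∧ (∀ i : Fin n, δ (Xinv F q i) = Xinv F q i) ∧
    (∀ i : Fin n, δ (C F q i) = -C F q i) ∧ ∀ i : Fin (n - 1), δ (T F q i) = T F q i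

/-- `τ` is the antiautomorphism of `H_n` with `τ(T_i) = T_i + ξ C_i C_{i+1}`,
`τ(C_j) = C_j`, `τ(X_j) = X_j`. -/
def IsTauAntiAut (q : F) {n : ℕ} (τ : H F q n →ₗ[F] H F q n) : Prop :=
  Function.Bijective τ ∧ (∀ a b : H F q n, τ (a * b) = τ b * τ a) ∧ τ 1 = 1 ∧
    (∀ i : Fin (n - 1),
      τ (T F q i) = T F q i + (q - q⁻¹) • (C F q (lo i) * C F q (hi i))) ∧
    (∀ j : Fin n, τ (C F q j) = C F q j) ∧ (∀ j : Fin n, τ (X F q j) = X F q j) ∧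
    ∀ j : Fin n, τ (Xinv F q j) = Xinv F q j

/-- `ρ'` is the representation of the subalgebra `B` obtained from the
`H_ν`-representation `ρν` by twisting with the isomorphism `φ_{x⁻¹}`
(determined by `X_i ↦ X_{x⁻¹ i}`, `C_i ↦ C_{x⁻¹ i}`, `T_w ↦ T_{x⁻¹ w x}`). -/
def IsTwistedRep (q : F) {n : ℕ} (ν : List ℕ) (x : Equiv.Perm (Fin n))
    (B : Subalgebra F (H F q n)) {M : Type} [AddCommGroup M] [Module F M]
    (ρν : ↥(parabolicC F q (n := n) ν) →ₐ[F] Module.End F M)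
    (ρ' : ↥B →ₐ[F] Module.End F M) : Prop :=
  (∀ (i : Fin n) (a : ↥B) (b : ↥(parabolicC F q (n := n) ν)),
      (a : H F q n) = X F q i → (b : H F q n) = X F q (x⁻¹ i) → ρ' a = ρν b) ∧
  (∀ (i : Fin n) (a : ↥B) (b : ↥(parabolicC F q (n := n) ν)),
      (a : H F q n) = Xinv F q i → (b : H F q n) = Xinv F q (x⁻¹ i) → ρ' a = ρν b) ∧
  (∀ (i : Fin n) (a : ↥B) (b : ↥(parabolicC F q (n := n) ν)),
      (a : H F q n) = C F q i → (b : H F q n) = C F q (x⁻¹ i) → ρ' a = ρν b) ∧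
  ∀ (j j' : Fin (n - 1)) (a : ↥B) (b : ↥(parabolicC F q (n := n) ν)),
      lo j' = x⁻¹ (lo j) → (a : H F q n) = T F q j → (b : H F q n) = T F q j' → ρ' a = ρν b

/-- The element `f = a_d X_1^d + ⋯ + a_1 X_1 + a_0` of `H_n`. -/
noncomputable def felem (q : F) (n d : ℕ) (aa : ℕ → F) : H F q n :=
  if h : 0 < n then ∑ i ∈ Finset.range (d + 1), aa i • X F q (⟨0, h⟩ : Fin n) ^ i else 0

/-- The conditions on the coefficients of `f`: degree `d ≥ 1`, monic, and
`a_i = a_0 a_{d-i}`. -/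
def GoodPoly (d : ℕ) (aa : ℕ → F) : Prop :=
  1 ≤ d ∧ aa d = 1 ∧ (∀ i ≤ d, aa i = aa 0 * aa (d - i)) ∧ ∀ i : ℕ, d < i → aa i = 0

/-- The relation generating the two-sided ideal `I_f` of `H_n`. -/
inductive CycRel (q : F) (n d : ℕ) (aa : ℕ → F) : H F q n → H F q n → Prop
  | rel : CycRel q n d aa (felem F q n d aa) 0

/-- The cyclotomic Hecke–Clifford superalgebra `H_n^f = H_n / I_f`. -/
abbrev Hf (q : F) (n d : ℕ) (aa : ℕ → F) : Type := RingQuot (CycRel F q n d aa)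

/-- The canonical quotient map `H_n → H_n^f`. -/
noncomputable def cyc (q : F) (n d : ℕ) (aa : ℕ → F) : H F q n →ₐ[F] Hf F q n d aa :=
  RingQuot.mkAlgHom F (CycRel F q n d aa)

noncomputable def Xf (q : F) (n d : ℕ) (aa : ℕ → F) (i : Fin n) : Hf F q n d aa :=
  cyc F q n d aa (X F q i)
noncomputable def Xinvf (q : F) (n d : ℕ) (aa : ℕ → F) (i : Fin n) : Hf F q n d aa :=
  cyc F q n d aa (Xinv F q i)
noncomputable def Cf (q : F) (n d : ℕ) (aa : ℕ → F) (i : Fin n) : Hf F q n d aa :=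
  cyc F q n d aa (C F q i)
noncomputable def Tf (q : F) (n d : ℕ) (aa : ℕ → F) (i : Fin (n - 1)) : Hf F q n d aa :=
  cyc F q n d aa (T F q i)

/-- `e` is the canonical embedding `H_k^f → H_N^f` (shifting all indices by `sh`;
for `sh = 0` this is the standard identification of `H_k^f` with a subalgebra of
`H_N^f`). -/
def IsCycEmb (q : F) (k N d : ℕ) (aa : ℕ → F) (sh : ℕ)
    (e : Hf F q k d aa →ₐ[F] Hf F q N d aa) : Prop :=
  (∀ (i : Fin k) (i' : Fin N), (i' : ℕ) = sh + (i : ℕ) →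
      e (Xf F q k d aa i) = Xf F q N d aa i') ∧
  (∀ (i : Fin k) (i' : Fin N), (i' : ℕ) = sh + (i : ℕ) →
      e (Xinvf F q k d aa i) = Xinvf F q N d aa i') ∧
  (∀ (i : Fin k) (i' : Fin N), (i' : ℕ) = sh + (i : ℕ) →
      e (Cf F q k d aa i) = Cf F q N d aa i') ∧
  ∀ (j : Fin (k - 1)) (j' : Fin (N - 1)), (j' : ℕ) = sh + (j : ℕ) →
      e (Tf F q k d aa j) = Tf F q N d aa j'

/-- `δ` is the grading automorphism of the superalgebra `H_n^f`. -/
def IsCycGrading (q : F) (n d : ℕ) (aa : ℕ → F)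
    (δ : Hf F q n d aa →ₐ[F] Hf F q n d aa) : Prop :=
  (∀ i : Fin n, δ (Xf F q n d aa i) = Xf F q n d aa i) ∧
  (∀ i : Fin n, δ (Xinvf F q n d aa i) = Xinvf F q n d aa i) ∧
  (∀ i : Fin n, δ (Cf F q n d aa i) = -Cf F q n d aa i) ∧
  ∀ j : Fin (n - 1), δ (Tf F q n d aa j) = Tf F q n d aa j

/-- The elements `f_1 = f`, `f_{i+1} = (T_i + ξ C_i C_{i+1}) f_i T_i` of `H_n`
(0-based indexing: `fseq k = f_{k+1}`). -/
noncomputable def fseq (q : F) (n d : ℕ) (aa : ℕ → F) : ℕ → H F q n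
  | 0 => felem F q n d aa
  | k + 1 =>
    if h : k < n - 1 then
      (T F q (⟨k, h⟩ : Fin (n - 1)) +
          (q - q⁻¹) • (C F q (lo (⟨k, h⟩ : Fin (n - 1))) *
            C F q (hi (⟨k, h⟩ : Fin (n - 1))))) *
        fseq q n d aa k * T F q (⟨k, h⟩ : Fin (n - 1))
    else 0

/-- `f_Z = f_{z_1} ⋯ f_{z_u}` for `Z = {z_1 < ⋯ < z_u} ⊆ {1,…,n}` (0-based). -/
noncomputable def fZ (q : F) (n d : ℕ) (aa : ℕ → F) (Z : Finset (Fin n)) : H F q n :=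
  ((Z.sort (· ≤ ·)).map fun z => fseq F q n d aa (z : ℕ)).prod

/-! With `ξ = q - q⁻¹`, `x = a + a⁻¹` and `y = b + b⁻¹`, the vanishing condition depends only on
`x` and `y`: it says that `x = y` or `(x - y)² = ξ² (x y - 4)`. Extend `i ↦ q(i)` to all integers
by the same formula. When `y = q(i)`, the quadratic in `x` has roots `q(i + 1)` and `q(i - 1)`, so
only the two ends of `I` need care. Everything there follows from the reflection
`q(-1 - i) = q(i)`: at the lower end it gives `q(-1) = q(0)`, and, since the quantum characteristic
`h` is odd and `i ↦ q(i)` has period `h`, it gives `q(ℓ + 1) = q(ℓ - 1)` at the upper end. -/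

section QuantumInt

variable {K : Type*} [DivisionRing K] {q : K}

/-- The quantum integer `[n] = q^{1-n} + q^{3-n} + ⋯ + q^{n-1}`, written as the sum whose vanishing
defines the quantum characteristic, so that it makes sense also for `q² = 1`. -/
def quantumInt (q : K) (n : ℕ) : K :=
  ∑ k ∈ Finset.range n, q ^ (1 - (n : ℤ) + 2 * (k : ℤ))

lemma quantumInt_one : quantumInt q 1 = 1 := by
  simp [quantumInt]

lemma quantumInt_two : quantumInt q 2 = q + q⁻¹ := by
  simp [quantumInt, Finset.sum_range_succ, add_comm]

lemma quantumInt_mul_sub_inv (hq0 : q ≠ 0) (n : ℕ) :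
    quantumInt q n * (q - q⁻¹) = q ^ (n : ℤ) - q ^ (-(n : ℤ)) := by
  have hterm (k : ℕ) : q ^ (1 - (n : ℤ) + 2 * (k : ℤ)) * (q - q⁻¹) =
      q ^ (2 * ((k + 1 : ℕ) : ℤ) - n) - q ^ (2 * (k : ℤ) - n) := by
    rw [mul_sub, ← zpow_add_one₀ hq0, ← zpow_sub_one₀ hq0]
    push_cast
    ring_nf
  rw [quantumInt, Finset.sum_mul, Finset.sum_congr rfl fun k _ => hterm k,
    Finset.sum_range_sub fun k : ℕ => q ^ (2 * (k : ℤ) - n)]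
  push_cast
  ring_nf

lemma zpow_two_mul_eq_one_of_quantumInt_eq_zero (hq0 : q ≠ 0) {n : ℕ}
    (hn : quantumInt q n = 0) : q ^ (2 * (n : ℤ)) = 1 := by
  have hsub : q ^ (n : ℤ) - q ^ (-(n : ℤ)) = 0 := by
    rw [← quantumInt_mul_sub_inv hq0, hn, zero_mul]
  rw [two_mul, zpow_add₀ hq0]
  nth_rewrite 1 [sub_eq_zero.mp hsub]
  rw [zpow_neg, inv_mul_cancel₀ (zpow_ne_zero _ hq0)]

lemma quantumInt_add_self (hq0 : q ≠ 0) (n : ℕ) :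
    quantumInt q (n + n) = quantumInt q n * (q ^ (n : ℤ) + q ^ (-(n : ℤ))) := by
  simp only [quantumInt]
  rw [Finset.sum_range_add, mul_add, Finset.sum_mul, Finset.sum_mul, add_comm]
  congr 1 <;>
  · refine Finset.sum_congr rfl fun k _ => ?_
    rw [← zpow_add₀ hq0]
    congr 1
    push_cast
    ring

end QuantumInt

section IntegerIndex

variable {K : Type*} [Field K] {q : K}

/-- The extension of `i ↦ q(i) = 2 (q^{2i+1} + q^{-2i-1}) / (q + q⁻¹)` to integer indices. It makes
sense of the neighbours `i ± 1` of every index `i`, including those outside `I`. -/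
def qresInt (q : K) (i : ℤ) : K :=
  2 * (q ^ (2 * i + 1) + q ^ (-(2 * i + 1))) / (q + q⁻¹)

lemma qresInt_neg_one_sub (i : ℤ) : qresInt q (-1 - i) = qresInt q i := by
  rw [qresInt, qresInt, add_comm (q ^ _)]
  ring_nf

lemma qresInt_periodic_of_quantumInt_eq_zero (hq0 : q ≠ 0) {n : ℕ} (hn : quantumInt q n = 0) :
    Function.Periodic (qresInt q) n := by
  intro i
  have hone := zpow_two_mul_eq_one_of_quantumInt_eq_zero hq0 hn
  have hshift : q ^ (2 * (i + n) + 1) = q ^ (2 * i + 1) := by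
    rw [show 2 * (i + (n : ℤ)) + 1 = 2 * i + 1 + 2 * n by ring, zpow_add₀ hq0, hone, mul_one]
  simp only [qresInt, zpow_neg, hshift]

lemma qresInt_add_one_add_qresInt_sub_one (hq0 : q ≠ 0) (i : ℤ) :
    qresInt q (i + 1) + qresInt q (i - 1) = (2 + (q - q⁻¹) ^ 2) * qresInt q i := by
  simp only [qresInt]
  rw [← add_div, ← mul_div_assoc]
  congr 1
  rw [show 2 * (i + 1) + 1 = 2 * i + 1 + 2 by ring, show 2 * (i - 1) + 1 = 2 * i + 1 - 2 by ring]
  generalize 2 * i + 1 = m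
  simp only [zpow_neg, zpow_add₀ hq0, zpow_sub₀ hq0]
  field_simp
  ring

lemma qresInt_add_one_mul_qresInt_sub_one (hq0 : q ≠ 0) (hq2 : q + q⁻¹ ≠ 0) (i : ℤ) :
    qresInt q (i + 1) * qresInt q (i - 1) = qresInt q i ^ 2 + 4 * (q - q⁻¹) ^ 2 := by
  simp only [qresInt]
  rw [div_mul_div_comm, div_pow, ← sq, div_add' _ _ _ (pow_ne_zero 2 hq2)]
  congr 1
  rw [show 2 * (i + 1) + 1 = 2 * i + 1 + 2 by ring, show 2 * (i - 1) + 1 = 2 * i + 1 - 2 by ring]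
  generalize 2 * i + 1 = m
  simp only [zpow_neg, zpow_add₀ hq0, zpow_sub₀ hq0]
  field_simp
  ring

lemma sub_qresInt_add_one_mul_sub_qresInt_sub_one (hq0 : q ≠ 0) (hq2 : q + q⁻¹ ≠ 0) (i : ℤ)
    (x : K) :
    (x - qresInt q (i + 1)) * (x - qresInt q (i - 1)) =
      (x - qresInt q i) ^ 2 - (q - q⁻¹) ^ 2 * (x * qresInt q i - 4) := by
  linear_combination qresInt_add_one_mul_qresInt_sub_one hq0 hq2 i -
    x * qresInt_add_one_add_qresInt_sub_one hq0 i

end IntegerIndex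

section VanishingCondition

variable {K : Type*} [Field K] {a b : K}

lemma inv_sq_mul_sq_mul_sq_eq_sq_sub (ha : a ≠ 0) (hb : b ≠ 0) :
    a⁻¹ ^ 2 * (a * b - 1) ^ 2 * (a * b⁻¹ - 1) ^ 2 = (a + a⁻¹ - (b + b⁻¹)) ^ 2 := by
  field_simp
  ring

lemma inv_mul_inv_mul_sq_add_inv_mul_mul_sq (ha : a ≠ 0) (hb : b ≠ 0) :
    a⁻¹ * b⁻¹ * (a * b - 1) ^ 2 + a⁻¹ * b * (a * b⁻¹ - 1) ^ 2 =
      (a + a⁻¹) * (b + b⁻¹) - 4 := by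
  field_simp
  ring

lemma add_inv_eq_or_sq_sub_eq (ha : a ≠ 0) (hb : b ≠ 0) {c : K}
    (hvanish : a⁻¹ ^ 2 * (a * b - 1) ^ 2 * (a * b⁻¹ - 1) ^ 2 *
        (a⁻¹ ^ 2 * (a * b - 1) ^ 2 * (a * b⁻¹ - 1) ^ 2 -
          c * a⁻¹ * b⁻¹ * (a * b - 1) ^ 2 - c * a⁻¹ * b * (a * b⁻¹ - 1) ^ 2) = 0) :
    a + a⁻¹ = b + b⁻¹ ∨
      (a + a⁻¹ - (b + b⁻¹)) ^ 2 = c * ((a + a⁻¹) * (b + b⁻¹) - 4) := by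
  have hprod : (a + a⁻¹ - (b + b⁻¹)) ^ 2 *
      ((a + a⁻¹ - (b + b⁻¹)) ^ 2 - c * ((a + a⁻¹) * (b + b⁻¹) - 4)) = 0 := by
    rw [← inv_mul_inv_mul_sq_add_inv_mul_mul_sq ha hb, ← inv_sq_mul_sq_mul_sq_eq_sq_sub ha hb,
      ← hvanish]
    ring
  exact (mul_eq_zero.mp hprod).imp (fun h => sub_eq_zero.mp (sq_eq_zero_iff.mp h)) sub_eq_zero.mp

end VanishingCondition

section QuantumCharacteristic

variable {F} {q : F} {h i : ℕ}

lemma qcharEq_iff_quantumInt :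
    qcharEq F q h ↔
      0 < h ∧ quantumInt q h = 0 ∧ ∀ n : ℕ, 0 < n → n < h → quantumInt q n ≠ 0 :=
  Iff.rfl

lemma qcharEq_two_of_add_inv_eq_zero (hq2 : q + q⁻¹ = 0) : qcharEq F q 2 := by
  refine qcharEq_iff_quantumInt.mpr ⟨two_pos, quantumInt_two.trans hq2, fun n hn hn2 => ?_⟩
  obtain rfl : n = 1 := by omega
  exact quantumInt_one.trans_ne one_ne_zero

lemma GoodParam.pow_ne_neg_one (h2 : (2 : F) ≠ 0) (hq : GoodParam F q) (n : ℕ) :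
    q ^ n ≠ -1 := by
  intro hn
  have hne : (1 : F) ≠ -1 := fun h => h2 (by linear_combination h)
  rcases hq.2 with ⟨m, hm, hprim⟩ | hfree
  · refine hne ?_
    rw [← hm.neg_one_pow, ← hn, pow_right_comm, hprim.pow_eq_one, one_pow]
  · have hpos : 0 < n := Nat.pos_of_ne_zero (by rintro rfl; exact hne (by simpa using hn))
    exact hfree (n * 2) (by omega) (by rw [pow_mul, hn, neg_one_sq])

lemma GoodParam.zpow_add_zpow_neg_ne_zero (h2 : (2 : F) ≠ 0) (hq : GoodParam F q) (n : ℕ) :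
    q ^ (n : ℤ) + q ^ (-(n : ℤ)) ≠ 0 := by
  intro hsum
  refine hq.pow_ne_neg_one h2 (n + n) ?_
  have hinv : q ^ n * (q ^ n)⁻¹ = 1 := mul_inv_cancel₀ (pow_ne_zero n hq.1)
  rw [zpow_neg, zpow_natCast] at hsum
  rw [pow_add]
  linear_combination q ^ n * hsum - hinv

lemma GoodParam.odd_of_qcharEq (h2 : (2 : F) ≠ 0) (hq : GoodParam F q) (hh : qcharEq F q h) :
    Odd h := by
  by_contra heven
  obtain ⟨k, rfl⟩ := Nat.not_odd_iff_even.mp heven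
  obtain ⟨hpos, hzero, hmin⟩ := qcharEq_iff_quantumInt.mp hh
  rw [quantumInt_add_self hq.1] at hzero
  exact mul_ne_zero (hmin k (by omega) (by omega)) (hq.zpow_add_zpow_neg_ne_zero h2 k) hzero

lemma memI.mono {j : ℕ} (hi : memI F q i) (hji : j ≤ i) : memI F q j := fun h hh => by
  have := hi h hh
  omega

lemma memI.succ_or_qcharEq (hodd : ∀ h, qcharEq F q h → Odd h) (hi : memI F q i) :
    memI F q (i + 1) ∨ qcharEq F q (2 * i + 1) := by
  refine or_iff_not_imp_right.mpr fun hchar h hh => ?_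
  have hle := hi h hh
  have hne : h ≠ 2 * i + 1 := fun heq => hchar (heq ▸ hh)
  obtain ⟨k, rfl⟩ := hodd h hh
  omega

end QuantumCharacteristic

section Neighbours

variable {F} {q : F} {i : ℕ}

lemma qresInt_natCast (i : ℕ) : qresInt q i = qres F q i := by
  rw [qresInt, qres, inv_pow, zpow_neg]
  norm_cast

lemma memI.exists_qresInt_sub_one_eq_qres (hi : memI F q i) :
    ∃ j : ℕ, memI F q j ∧ |(i : ℤ) - (j : ℤ)| ≤ 1 ∧ qresInt q (i - 1) = qres F q j := by
  rcases i with _ | k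
  · exact ⟨0, hi, by simp, by simpa using (qresInt_neg_one_sub 0).trans (qresInt_natCast 0)⟩
  · exact ⟨k, hi.mono k.le_succ, by simp, by simp [qresInt_natCast]⟩

lemma qcharEq.qresInt_add_one_eq_qresInt_sub_one (hq0 : q ≠ 0) (hchar : qcharEq F q (2 * i + 1)) :
    qresInt q (i + 1) = qresInt q (i - 1) := by
  have hperiodic := qresInt_periodic_of_quantumInt_eq_zero hq0
    (qcharEq_iff_quantumInt.mp hchar).2.1
  rw [← qresInt_neg_one_sub, ← hperiodic]
  congr 1
  push_cast
  ring

lemma memI.exists_qresInt_add_one_eq_qres (hq0 : q ≠ 0) (hodd : ∀ h, qcharEq F q h → Odd h)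
    (hi : memI F q i) :
    ∃ j : ℕ, memI F q j ∧ |(i : ℤ) - (j : ℤ)| ≤ 1 ∧ qresInt q (i + 1) = qres F q j := by
  rcases hi.succ_or_qcharEq hodd with hsucc | hchar
  · exact ⟨i + 1, hsucc, by simp, mod_cast qresInt_natCast (i + 1)⟩
  · rw [hchar.qresInt_add_one_eq_qresInt_sub_one hq0]
    exact hi.exists_qresInt_sub_one_eq_qres

theorem eigenvalue_neighbour_lemma_general (hq0 : q ≠ 0) (hodd : ∀ h, qcharEq F q h → Odd h)
    (hi : memI F q i) {a b : F} (ha : a ≠ 0) (hb : b ≠ 0) (hbq : b + b⁻¹ = qres F q i)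
    (hvanish : a⁻¹ ^ 2 * (a * b - 1) ^ 2 * (a * b⁻¹ - 1) ^ 2 *
        (a⁻¹ ^ 2 * (a * b - 1) ^ 2 * (a * b⁻¹ - 1) ^ 2 -
          (q - q⁻¹) ^ 2 * a⁻¹ * b⁻¹ * (a * b - 1) ^ 2 -
          (q - q⁻¹) ^ 2 * a⁻¹ * b * (a * b⁻¹ - 1) ^ 2) = 0) :
    ∃ j : ℕ, memI F q j ∧ |(i : ℤ) - (j : ℤ)| ≤ 1 ∧ a + a⁻¹ = qres F q j := by
  have hq2 : q + q⁻¹ ≠ 0 := fun h =>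
    absurd (hodd 2 (qcharEq_two_of_add_inv_eq_zero h)) (by decide)
  rcases add_inv_eq_or_sq_sub_eq ha hb hvanish with heq | hquad
  · exact ⟨i, hi, by simp, heq.trans hbq⟩
  rw [hbq, ← qresInt_natCast, ← sub_eq_zero,
    ← sub_qresInt_add_one_mul_sub_qresInt_sub_one hq0 hq2] at hquad
  rcases mul_eq_zero.mp hquad with hup | hdown
  · rw [sub_eq_zero.mp hup]
    exact hi.exists_qresInt_add_one_eq_qres hq0 hodd
  · rw [sub_eq_zero.mp hdown]
    exact hi.exists_qresInt_sub_one_eq_qres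

end Neighbours

/-- **Technical lemma on eigenvalues** (Lemma `nazelttech` of Brundan–Kleshchev):
if `b + b⁻¹ = q(i)` for some `i ∈ I` and the displayed polynomial expression in
`a, b` vanishes, then `a + a⁻¹ = q(j)` for some `j ∈ I` with `|i - j| ≤ 1`. -/
theorem eigenvalue_neighbour_lemma
    (F : Type) [Field F] [IsAlgClosed F] (h2 : (2 : F) ≠ 0)
    (q : F) (hq : GoodParam F q)
    (i : ℕ) (hi : memI F q i) (a b : F) (ha : a ≠ 0) (hb : b ≠ 0)
    (hbq : b + b⁻¹ = qres F q i)
    (heq : a⁻¹ ^ 2 * (a * b - 1) ^ 2 * (a * b⁻¹ - 1) ^ 2 *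
        (a⁻¹ ^ 2 * (a * b - 1) ^ 2 * (a * b⁻¹ - 1) ^ 2 -
          (q - q⁻¹) ^ 2 * a⁻¹ * b⁻¹ * (a * b - 1) ^ 2 -
          (q - q⁻¹) ^ 2 * a⁻¹ * b * (a * b⁻¹ - 1) ^ 2) = 0) :
    ∃ j : ℕ, memI F q j ∧ |(i : ℤ) - (j : ℤ)| ≤ 1 ∧ a + a⁻¹ = qres F q j :=
  eigenvalue_neighbour_lemma_general hq.1 (fun _ => hq.odd_of_qcharEq h2) hi ha hb hbq heq

end HC
end

section
/- Let M be a finite-dimensional H_n-module and 1 ≤ j ≤ n. If every eigenvalue of the action of X_j + X_j^{−1} on M is of the form q(i) for some i ∈ I, then for every k = 1,…,n, every eigenvalue of X_k + X_k^{−1} on M is of the form q(i) for some i ∈ I. -/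
set_option maxHeartbeats 1000000

namespace HC

variable (F : Type) [Field F]

/-!
Write `Y_i = X_i + X_i⁻¹`. Each pair `X_i, X_{i+1}` carries an intertwiner `φ`, obtained from `T_i`
with coefficients commuting with `Y_i` and `Y_{i+1}`, which exchanges `Y_i` and `Y_{i+1}` and
satisfies `φ² = ξ² (Y_i Y_{i+1} - 4) - (Y_i - Y_{i+1})²`. Let `v` be a common eigenvector of `Y_i`
and `Y_{i+1}`, with eigenvalues `ν` and `μ`. If `φ v ≠ 0`, then `μ` is also an eigenvalue of `Y_i`.
If `φ v = 0`, then `(ν - μ)² = ξ² (ν μ - 4)`; for `ν = q(i)` this quadratic equation in `μ` has the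
roots `q(i - 1)` and `q(i + 1)`. Since `q(-1) = q(0)` and, when `I` is finite, `q(ℓ + 1)` is again
one of the values of `q` on `I`, no eigenvalue escapes these values.
-/

section RankTwo

variable {S R : Type*} [CommRing S] [Ring R] [Algebra S R]

theorem mul_sub_smul_sq {z : S} {t D A : R} (htt : t * t = z • t + 1)
    (htD : t * D = -(D * t) + (2 * z) • A) (hDA : Commute D A)
    (htA : t * A = (A - D) * t + z • A) :
    (D * t - z • A) ^ 2 = z ^ 2 • ((A - D) * A) - D ^ 2 := by
  have hDtDt : D * t * (D * t) = -(D * D * (z • t + 1)) + (2 * z) • (D * A * t) := by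
    rw [mul_assoc, ← mul_assoc t, htD, ← htt]
    simp only [add_mul, mul_add, neg_mul, mul_neg, smul_mul_assoc, mul_smul_comm, mul_assoc]
  have hDtA : D * t * A = D * A * t - D * D * t + z • (D * A) := by
    rw [mul_assoc, htA]
    simp only [mul_add, mul_sub, sub_mul, mul_smul_comm, mul_assoc]
  have hADt : A * (D * t) = D * A * t := by rw [← mul_assoc, hDA.eq]
  simp only [pow_two, sub_mul, mul_sub, smul_mul_assoc, mul_smul_comm, hDtDt, hDtA, hADt, mul_add,
    mul_one]
  module

/-- The defining relations of `H_2` on `X_1, X_2, C_1, C_2, T_1`, for elements `x, y, c, d, t` of an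
arbitrary algebra and with parameter `ξ = z`; the inverses of `X_1`, `X_2` are encoded by taking
`x`, `y` to be units. -/
structure RankTwoRelations (z : S) (x y : Rˣ) (c d t : R) : Prop where
  commute_x_y : Commute (x : R) y
  c_mul_c : c * c = 1
  d_mul_d : d * d = 1
  d_mul_c : d * c = -(c * d)
  semiconjBy_c_x : SemiconjBy c x ↑x⁻¹
  commute_c_y : Commute c y
  commute_d_x : Commute d x
  semiconjBy_d_y : SemiconjBy d y ↑y⁻¹
  t_mul_t : t * t = z • t + 1
  semiconjBy_t_c : SemiconjBy t c d
  cross : (t + z • (c * d)) * x * t = y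

/-- The element `X + X⁻¹` attached to a unit `X`. -/
def addInv (x : Rˣ) : R := x + ↑x⁻¹

/-- The failure, divided by `ξ`, of `T_1` to interchange `X_1 + X_1⁻¹` and `X_2 + X_2⁻¹`; see
`RankTwoRelations.t_mul_addInv_x`. -/
def defect (x y : Rˣ) (c d : R) : R := ↑x⁻¹ - y + c * d * (y - x)

/-- The rank-two intertwiner. It is the element `Φ_1` of Jones–Nazarov and Brundan–Kleshchev
divided by `X_1 + X_1⁻¹ - X_2 - X_2⁻¹`. -/
def intertwiner (z : S) (x y : Rˣ) (c d t : R) : R :=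
  (addInv x - addInv y) * t - z • defect x y c d

theorem defect_sub (x y : Rˣ) (c d : R) :
    defect x y c d - (addInv x - addInv y) = c * d * (y - x) + (↑y⁻¹ - x : R) := by
  simp only [defect, addInv]
  abel

namespace RankTwoRelations

variable {z : S} {x y : Rˣ} {c d t : R} (h : RankTwoRelations z x y c d t)
include h

theorem cd_mul_cd : c * d * (c * d) = -1 := by
  rw [mul_assoc, ← mul_assoc d c, h.d_mul_c, neg_mul, mul_assoc c d d, h.d_mul_d, mul_one, mul_neg,
    h.c_mul_c]

theorem semiconjBy_cd_x : SemiconjBy (c * d) x ↑x⁻¹ :=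
  h.semiconjBy_c_x.mul_left h.commute_d_x

theorem semiconjBy_cd_y : SemiconjBy (c * d) y ↑y⁻¹ :=
  SemiconjBy.mul_left h.commute_c_y.units_inv_right h.semiconjBy_d_y

theorem semiconjBy_cd_x_inv : SemiconjBy (c * d) ↑x⁻¹ x := by
  simpa using h.semiconjBy_cd_x.units_inv_right

theorem semiconjBy_cd_y_inv : SemiconjBy (c * d) ↑y⁻¹ y := by
  simpa using h.semiconjBy_cd_y.units_inv_right

theorem t_mul_sub_smul_one : t * (t - z • 1) = 1 := by
  rw [mul_sub, h.t_mul_t, mul_smul_comm, mul_one]; abel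

theorem sub_smul_one_mul_t : (t - z • 1) * t = 1 := by
  rw [sub_mul, h.t_mul_t, smul_mul_assoc, one_mul]; abel

theorem t_mul_d : t * d = c * t - z • c + z • d := by
  have conj : (t - z • 1) * d = c * (t - z • 1) := by
    calc (t - z • 1) * d = (t - z • 1) * (d * t) * (t - z • 1) := by
          rw [mul_assoc, mul_assoc d, h.t_mul_sub_smul_one, mul_one]
      _ = c * (t - z • 1) := by
          rw [← h.semiconjBy_t_c.eq, ← mul_assoc, h.sub_smul_one_mul_t, one_mul]
  simp only [sub_mul, mul_sub, smul_mul_assoc, mul_smul_comm, one_mul, mul_one] at conj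
  rw [← conj]; abel

theorem t_mul_cd : t * (c * d) = -(c * d * t) + z • (c * d) + z • (1 : R) := by
  rw [← mul_assoc, h.semiconjBy_t_c.eq, mul_assoc, h.t_mul_d, mul_add, mul_sub, ← mul_assoc,
    mul_smul_comm, mul_smul_comm, h.d_mul_c, h.d_mul_d, neg_mul, smul_neg, sub_neg_eq_add]

theorem t_mul_x : t * x = y * t - z • (y : R) - z • (c * d * x) := by
  have cross_inv : (t + z • (c * d)) * x = y * (t - z • 1) := by
    rw [← h.cross, mul_assoc _ t, h.t_mul_sub_smul_one, mul_one]
  rw [add_mul, mul_sub, smul_mul_assoc, mul_smul_comm, mul_one] at cross_inv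
  rw [← cross_inv]; abel

theorem t_mul_y : t * y = x * t - z • (c * d * y) + z • (y : R) := by
  have left_inv : (t + z • (c * d) - z • 1) * (t + z • (c * d)) = 1 := by
    simp only [add_mul, mul_add, sub_mul, h.t_mul_t, h.t_mul_cd, h.cd_mul_cd, smul_mul_assoc,
      mul_smul_comm, one_mul]
    module
  have cross_inv : (t + z • (c * d) - z • 1) * y = x * t := by
    rw [← h.cross, mul_assoc _ (x : R) t, ← mul_assoc, left_inv, one_mul]
  rw [sub_mul, add_mul, smul_mul_assoc, smul_mul_assoc, one_mul] at cross_inv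
  rw [← cross_inv]; abel

theorem t_mul_x_inv : t * ↑x⁻¹ = ↑y⁻¹ * t + z • (↑x⁻¹ : R) + z • (c * d * y) := by
  have conj : (↑y⁻¹ * t : R) = t * ↑x⁻¹ - z • (↑x⁻¹ : R) - z • (c * d * y) := by
    calc (↑y⁻¹ * t : R) = ↑y⁻¹ * (t * x) * ↑x⁻¹ := by
          rw [mul_assoc, mul_assoc, Units.mul_inv, mul_one]
      _ = t * ↑x⁻¹ - z • (↑x⁻¹ : R) - z • (↑y⁻¹ * (c * d)) := by
          simp only [h.t_mul_x, mul_sub, sub_mul, mul_smul_comm, smul_mul_assoc, mul_assoc,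
            Units.inv_mul_cancel_left, Units.mul_inv, mul_one]
      _ = t * ↑x⁻¹ - z • (↑x⁻¹ : R) - z • (c * d * y) := by rw [h.semiconjBy_cd_y.eq]
  rw [conj]; abel

theorem t_mul_y_inv : t * ↑y⁻¹ = ↑x⁻¹ * t - z • (↑x⁻¹ : R) + z • (c * d * x) := by
  have conj : (↑x⁻¹ * t : R) = t * ↑y⁻¹ - z • (c * d * x) + z • (↑x⁻¹ : R) := by
    calc (↑x⁻¹ * t : R) = ↑x⁻¹ * (t * y) * ↑y⁻¹ := by
          rw [mul_assoc, mul_assoc, Units.mul_inv, mul_one]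
      _ = t * ↑y⁻¹ - z • (↑x⁻¹ * (c * d)) + z • (↑x⁻¹ : R) := by
          simp only [h.t_mul_y, mul_sub, sub_mul, mul_add, add_mul, mul_smul_comm, smul_mul_assoc,
            mul_assoc, Units.inv_mul_cancel_left, Units.mul_inv, mul_one]
      _ = t * ↑y⁻¹ - z • (c * d * x) + z • (↑x⁻¹ : R) := by rw [h.semiconjBy_cd_x.eq]
  rw [conj]; abel

theorem t_mul_addInv_x : t * addInv x = addInv y * t + z • defect x y c d := by
  simp only [addInv, defect, mul_add, mul_sub, add_mul, h.t_mul_x, h.t_mul_x_inv]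
  module

theorem t_mul_addInv_y : t * addInv y = addInv x * t - z • defect x y c d := by
  simp only [addInv, defect, mul_add, mul_sub, add_mul, h.t_mul_y, h.t_mul_y_inv]
  module

theorem commute_addInv : Commute (addInv x) (addInv y) :=
  have commute_x : Commute (x : R) (addInv y) :=
    h.commute_x_y.add_right h.commute_x_y.units_inv_right
  commute_x.add_left commute_x.units_inv_left

theorem commute_addInv_x_defect : Commute (addInv x) (defect x y c d) := by
  have hx : Commute (addInv x) x :=
    (Commute.refl (x : R)).add_left (Commute.refl (x : R)).units_inv_left
  have hy : Commute (addInv x) y := h.commute_x_y.add_left h.commute_x_y.units_inv_left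
  have hcd : Commute (addInv x) (c * d) := by
    refine Commute.symm ?_
    simpa only [addInv, Commute, add_comm] using h.semiconjBy_cd_x.add_right h.semiconjBy_cd_x_inv
  exact (hx.units_inv_right.sub_right hy).add_right (hcd.mul_right (hy.sub_right hx))

theorem commute_addInv_y_defect : Commute (addInv y) (defect x y c d) := by
  have hx : Commute (addInv y) x :=
    h.commute_x_y.symm.add_left h.commute_x_y.symm.units_inv_left
  have hy : Commute (addInv y) y :=
    (Commute.refl (y : R)).add_left (Commute.refl (y : R)).units_inv_left
  have hcd : Commute (addInv y) (c * d) := by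
    refine Commute.symm ?_
    simpa only [addInv, Commute, add_comm] using h.semiconjBy_cd_y.add_right h.semiconjBy_cd_y_inv
  exact (hx.units_inv_right.sub_right hy).add_right (hcd.mul_right (hy.sub_right hx))

theorem t_mul_cd_mul_sub :
    t * (c * d * (y - x)) = c * d * (y - x) * t - z • (c * d * (x + y)) := by
  have t_mul_sub : t * (y - x : R) = (x - y) * t + (2 * z) • (y : R) - z • (c * d * (y - x)) := by
    simp only [mul_sub, sub_mul, h.t_mul_x, h.t_mul_y]
    module
  have cd_mul_cd_mul (w : R) : c * d * (c * d * w) = -w := by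
    rw [← mul_assoc, h.cd_mul_cd, neg_one_mul]
  calc t * (c * d * (y - x))
      = -(c * d * (t * (y - x))) + z • (c * d * (y - x)) + z • (y - x : R) := by
        rw [← mul_assoc, h.t_mul_cd]
        simp only [add_mul, neg_mul, smul_mul_assoc, one_mul, mul_assoc]
    _ = c * d * (y - x) * t - z • (c * d * (x + y)) := by
        rw [t_mul_sub, mul_sub (c * d), mul_add (c * d), mul_smul_comm z, cd_mul_cd_mul,
          mul_smul_comm]
        simp only [mul_sub, sub_mul, mul_add, mul_assoc]
        module

theorem t_mul_defect :
    t * defect x y c d =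
      (defect x y c d - (addInv x - addInv y)) * t + z • defect x y c d := by
  rw [defect_sub, defect, mul_add, mul_sub, h.t_mul_x_inv, h.t_mul_y, h.t_mul_cd_mul_sub]
  simp only [mul_add, mul_sub, add_mul, sub_mul]
  module

theorem defect_sub_mul_defect :
    (defect x y c d - (addInv x - addInv y)) * defect x y c d = addInv x * addInv y - 4 := by
  have comm : (y - x : R) * (↑x⁻¹ - y) = (↑x⁻¹ - y) * (y - x) :=
    ((h.commute_x_y.symm.sub_left (Commute.refl _)).units_inv_right.sub_right
      ((Commute.refl _).sub_left h.commute_x_y)).eq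
  have sub_mul_cd : (y - x : R) * (c * d) = c * d * (↑y⁻¹ - ↑x⁻¹) :=
    (h.semiconjBy_cd_y_inv.sub_right h.semiconjBy_cd_x_inv).eq.symm
  have inv_sub_mul_cd : (↑y⁻¹ - x : R) * (c * d) = -(c * d * (↑x⁻¹ - y)) := by
    rw [← mul_neg, neg_sub]
    exact (h.semiconjBy_cd_y.sub_right h.semiconjBy_cd_x_inv).eq.symm
  have inv_comm : (↑y⁻¹ : R) * ↑x⁻¹ = ↑x⁻¹ * ↑y⁻¹ :=
    h.commute_x_y.symm.units_inv_left.units_inv_right.eq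
  calc (defect x y c d - (addInv x - addInv y)) * defect x y c d
      = (c * d * (y - x) + (↑y⁻¹ - x)) * ((↑x⁻¹ - y) + c * d * (y - x)) := by
        rw [defect_sub, defect]
    _ = c * d * ((y - x) * (↑x⁻¹ - y)) + c * d * ((y - x) * (c * d)) * (y - x)
          + (↑y⁻¹ - x) * (↑x⁻¹ - y) + (↑y⁻¹ - x) * (c * d) * (y - x) := by
        simp only [add_mul, mul_add, mul_assoc, add_assoc, add_left_comm]
    _ = (↑y⁻¹ - x) * (↑x⁻¹ - y) - (↑y⁻¹ - ↑x⁻¹) * (y - x) := by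
        rw [comm, sub_mul_cd, inv_sub_mul_cd, ← mul_assoc (c * d) (c * d), h.cd_mul_cd]
        noncomm_ring
    _ = addInv x * addInv y - 4 := by
        simp only [addInv, mul_sub, sub_mul, mul_add, add_mul, Units.mul_inv, Units.inv_mul,
          inv_comm, h.commute_x_y.symm.units_inv_left.eq]
        rw [show (4 : R) = 1 + 1 + 1 + 1 by norm_num]
        abel

theorem intertwiner_semiconjBy_addInv_y :
    SemiconjBy (intertwiner z x y c d t) (addInv y) (addInv x) := by
  have hD : Commute (addInv x) (addInv x - addInv y) :=
    (Commute.refl _).sub_right h.commute_addInv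
  calc intertwiner z x y c d t * addInv y
      = (addInv x - addInv y) * (t * addInv y) - z • (defect x y c d * addInv y) := by
        rw [intertwiner, sub_mul, mul_assoc, smul_mul_assoc]
    _ = (addInv x - addInv y) * addInv x * t - z • (addInv x * defect x y c d) := by
        rw [h.t_mul_addInv_y, ← h.commute_addInv_y_defect.eq]
        simp only [mul_sub, sub_mul, mul_smul_comm, mul_assoc]
        module
    _ = addInv x * intertwiner z x y c d t := by
        rw [← hD.eq, intertwiner, mul_sub (addInv x) (_ * t), mul_smul_comm, mul_assoc]

theorem intertwiner_semiconjBy_addInv_x :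
    SemiconjBy (intertwiner z x y c d t) (addInv x) (addInv y) := by
  have hD : Commute (addInv y) (addInv x - addInv y) :=
    h.commute_addInv.symm.sub_right (Commute.refl _)
  calc intertwiner z x y c d t * addInv x
      = (addInv x - addInv y) * (t * addInv x) - z • (defect x y c d * addInv x) := by
        rw [intertwiner, sub_mul, mul_assoc, smul_mul_assoc]
    _ = (addInv x - addInv y) * addInv y * t - z • (addInv y * defect x y c d) := by
        rw [h.t_mul_addInv_x, ← h.commute_addInv_x_defect.eq]
        simp only [mul_add, sub_mul, mul_smul_comm, mul_assoc]
        module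
    _ = addInv y * intertwiner z x y c d t := by
        rw [← hD.eq, intertwiner, mul_sub (addInv y) (_ * t), mul_smul_comm, mul_assoc]

theorem intertwiner_sq :
    intertwiner z x y c d t ^ 2 =
      z ^ 2 • (addInv x * addInv y - 4) - (addInv x - addInv y) ^ 2 := by
  have htD : t * (addInv x - addInv y) =
      -((addInv x - addInv y) * t) + (2 * z) • defect x y c d := by
    rw [mul_sub, sub_mul, h.t_mul_addInv_x, h.t_mul_addInv_y]
    module
  rw [intertwiner, mul_sub_smul_sq h.t_mul_t htD
    (h.commute_addInv_x_defect.sub_left h.commute_addInv_y_defect) h.t_mul_defect,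
    h.defect_sub_mul_defect]

end RankTwoRelations

end RankTwo


section Presentation

variable {F}

theorem X_mul_Xinv (q : F) {n : ℕ} (i : Fin n) : X F q i * Xinv F q i = 1 := by
  simpa only [X, Xinv, map_mul, map_one] using RingQuot.mkAlgHom_rel F (Rel.XXinv (q := q) i)

theorem Xinv_mul_X (q : F) {n : ℕ} (i : Fin n) : Xinv F q i * X F q i = 1 := by
  simpa only [X, Xinv, map_mul, map_one] using RingQuot.mkAlgHom_rel F (Rel.XinvX (q := q) i)

/-- `X_i` as a unit of `H_n`. -/
noncomputable def unitX (q : F) {n : ℕ} (i : Fin n) : (H F q n)ˣ :=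
  ⟨X F q i, Xinv F q i, X_mul_Xinv q i, Xinv_mul_X q i⟩

theorem coe_unitX (q : F) {n : ℕ} (i : Fin n) : (unitX q i : H F q n) = X F q i := rfl

theorem coe_inv_unitX (q : F) {n : ℕ} (i : Fin n) : ↑(unitX q i)⁻¹ = Xinv F q i := rfl

theorem rankTwoRelations (q : F) {n : ℕ} (i : Fin (n - 1)) :
    RankTwoRelations (q - q⁻¹) (unitX q (lo i)) (unitX q (hi i)) (C F q (lo i)) (C F q (hi i))
      (T F q i) := by
  have lo_ne_hi : lo i ≠ hi i := by simp [lo, hi]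
  have rel {a b : FA F n} (hab : Rel F q n a b) :
      RingQuot.mkAlgHom F (Rel F q n) a = RingQuot.mkAlgHom F (Rel F q n) b :=
    RingQuot.mkAlgHom_rel F hab
  constructor
  all_goals simp only [SemiconjBy, Commute, coe_unitX, coe_inv_unitX, X, Xinv, C, T, ← map_mul,
    ← map_add, ← map_smul, ← map_neg, ← map_one (RingQuot.mkAlgHom F (Rel F q n))]
  case commute_x_y => exact rel (.XX (lo i) (hi i))
  case c_mul_c => exact rel (.CC (lo i))
  case d_mul_d => exact rel (.CC (hi i))
  case d_mul_c => exact rel (.Canti _ _ lo_ne_hi.symm)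
  case semiconjBy_c_x => exact rel (.CX (lo i))
  case commute_c_y => exact rel (.CXo _ _ lo_ne_hi)
  case commute_d_x => exact rel (.CXo _ _ lo_ne_hi.symm)
  case semiconjBy_d_y => exact rel (.CX (hi i))
  case t_mul_t => exact rel (.Tquad i)
  case semiconjBy_t_c => exact rel (.TC i)
  case cross => exact rel (.cross i)

end Presentation

section Eigenvalues

variable {K M : Type*} [Field K] [IsAlgClosed K] [AddCommGroup M] [Module K M]
  [FiniteDimensional K M]

theorem exists_common_hasEigenvector {f g : Module.End K M} (hfg : Commute f g) {μ : K}
    (hμ : g.HasEigenvalue μ) : ∃ ν v, f.HasEigenvector ν v ∧ g.HasEigenvector μ v := by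
  have : Nontrivial (g.eigenspace μ) := Submodule.nontrivial_iff_ne_bot.2 hμ
  obtain ⟨ν, hν⟩ := Module.End.exists_eigenvalue
    (f.restrict (Module.End.mapsTo_genEigenspace_of_comm hfg.symm μ 1))
  obtain ⟨v, hv⟩ := hν.exists_hasEigenvector
  have hv0 : (v : M) ≠ 0 := by simpa using hv.2
  exact ⟨ν, v, Module.End.hasEigenvector_iff.2
    ⟨Module.End.mem_eigenspace_iff.2 (congrArg Subtype.val hv.apply_eq_smul), hv0⟩,
    Module.End.hasEigenvector_iff.2 ⟨v.2, hv0⟩⟩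

theorem hasEigenvalue_or_exists_of_semiconjBy {f g φ : Module.End K M} (hfg : Commute f g)
    (hφ : SemiconjBy φ g f) {μ : K} (hμ : g.HasEigenvalue μ) :
    f.HasEigenvalue μ ∨ ∃ ν v, f.HasEigenvector ν v ∧ g.HasEigenvector μ v ∧ φ v = 0 := by
  obtain ⟨ν, v, hf, hg⟩ := exists_common_hasEigenvector hfg hμ
  by_cases hv : φ v = 0
  · exact .inr ⟨ν, v, hf, hg, hv⟩
  · refine .inl (Module.End.hasEigenvalue_of_hasEigenvector (x := φ v)
      ⟨Module.End.mem_eigenspace_iff.2 ?_, hv⟩)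
    rw [← Module.End.mul_apply, ← hφ.eq, Module.End.mul_apply, hg.apply_eq_smul, map_smul]

theorem hasEigenvalue_or_exists_quadratic {f g φ : Module.End K M} {z : K} (hfg : Commute f g)
    (hφ : SemiconjBy φ g f) (hsq : φ ^ 2 = z ^ 2 • (f * g - 4) - (f - g) ^ 2) {μ : K}
    (hμ : g.HasEigenvalue μ) :
    f.HasEigenvalue μ ∨
      ∃ ν, f.HasEigenvalue ν ∧ (ν - μ) ^ 2 = z ^ 2 * (ν * μ - 4) := by
  refine (hasEigenvalue_or_exists_of_semiconjBy hfg hφ hμ).imp_right ?_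
  rintro ⟨ν, v, hf, hg, hφv⟩
  refine ⟨ν, Module.End.hasEigenvalue_of_hasEigenvector hf, ?_⟩
  have hfour : (4 : Module.End K M) v = (4 : K) • v :=
    (Module.End.ofNat_apply 4 v).trans (ofNat_smul_eq_nsmul K 4 v).symm
  have apply_v := LinearMap.congr_fun hsq v
  simp only [pow_two, Module.End.mul_apply, LinearMap.sub_apply, LinearMap.smul_apply, hφv,
    hf.apply_eq_smul, hg.apply_eq_smul, map_smul, map_sub, map_zero, hfour] at apply_v
  have smul_v : ((ν - μ) ^ 2 - z ^ 2 * (ν * μ - 4)) • v = 0 := by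
    linear_combination (norm := module) apply_v
  exact sub_eq_zero.1 ((smul_eq_zero.1 smul_v).resolve_right hf.2)

end Eigenvalues

section Residues

variable {F} {q : F}

theorem sum_quantum_eq_zero_iff (hq0 : q ≠ 0) (hq : q ^ 2 ≠ 1) (h : ℕ) :
    (∑ k ∈ Finset.range h, q ^ (1 - (h : ℤ) + 2 * (k : ℤ))) = 0 ↔ q ^ (2 * h) = 1 := by
  have sum_eq : (∑ k ∈ Finset.range h, q ^ (1 - (h : ℤ) + 2 * (k : ℤ))) =
      q ^ (1 - (h : ℤ)) * ∑ k ∈ Finset.range h, (q ^ 2) ^ k := by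
    rw [Finset.mul_sum]
    refine Finset.sum_congr rfl fun k _ => ?_
    rw [zpow_add₀ hq0, zpow_mul]
    norm_cast
  rw [sum_eq, mul_eq_zero, or_iff_right (zpow_ne_zero _ hq0), geom_sum_eq hq,
    div_eq_zero_iff, or_iff_left (sub_ne_zero.2 hq), sub_eq_zero, pow_mul]

theorem memI_mono {i i' : ℕ} (hle : i' ≤ i) (hi : memI F q i) : memI F q i' :=
  fun h hh => by have := hi h hh; omega

namespace GoodParam

theorem pow_eq_one_of_pow_two_mul (hq : GoodParam F q) {k : ℕ} (h : q ^ (2 * k) = 1) :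
    q ^ k = 1 := by
  rcases hq.2 with ⟨m, hm, hp⟩ | hq
  · exact (hp.pow_eq_one_iff_dvd k).2
      (hm.coprime_two_right.dvd_of_dvd_mul_left (hp.dvd_of_pow_eq_one _ h))
  · obtain rfl : k = 0 := by
      by_contra hk
      exact hq _ (by omega) h
    exact pow_zero q

theorem sq (hq : GoodParam F q) : GoodParam F (q ^ 2) := by
  refine ⟨pow_ne_zero 2 hq.1, hq.2.imp ?_ ?_⟩
  · rintro ⟨m, hm, hp⟩
    exact ⟨m, hm, hp.pow_of_coprime 2 hm.coprime_two_left⟩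
  · intro hq m hm
    rw [← pow_mul]
    exact hq _ (by omega)

theorem add_inv_ne_zero (hq : GoodParam F q) (h2 : (2 : F) ≠ 0) : q + q⁻¹ ≠ 0 := by
  intro h
  have hq0 := hq.1
  have sq_eq : q ^ 2 = -1 := by
    field_simp at h
    linear_combination h
  have sq_eq_one : q ^ 2 = 1 :=
    hq.pow_eq_one_of_pow_two_mul (by linear_combination (q ^ 2 - 1) * sq_eq)
  exact h2 (by linear_combination sq_eq - sq_eq_one)

end GoodParam

/-- `2(t + t⁻¹)/(q + q⁻¹)`, so that `q(i)` is the residue of `t = q^{2i+1}`. -/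
def residue (q t : F) : F := 2 * (t + t⁻¹) / (q + q⁻¹)

theorem qres_eq_residue (q : F) (i : ℕ) : qres F q i = residue q (q ^ (2 * i + 1)) := by
  rw [qres, residue, inv_pow]

theorem residue_inv (q t : F) : residue q t⁻¹ = residue q t := by
  rw [residue, residue, inv_inv, add_comm]

theorem eq_residue_mul_sq_or_div_sq {t lam : F} (hs : q + q⁻¹ ≠ 0) (ht : t ≠ 0)
    (h : (residue q t - lam) ^ 2 = (q - q⁻¹) ^ 2 * (residue q t * lam - 4)) :
    lam = residue q (t * q ^ 2) ∨ lam = residue q (t / q ^ 2) := by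
  have hq0 : q ≠ 0 := by
    rintro rfl
    simp at hs
  have hs' : q ^ 2 + 1 ≠ 0 := fun e => hs (by field_simp; simpa using e)
  rw [← sub_eq_zero, ← sub_eq_zero (b := residue q (t / q ^ 2)), ← mul_eq_zero,
    ← sub_eq_zero.2 h]
  simp only [residue]
  field_simp
  ring

/-- At `i = 0` the truncated subtraction is harmless: `q(-1) = q(0)`. -/
theorem residue_pow_div_sq (hq0 : q ≠ 0) (i : ℕ) :
    residue q (q ^ (2 * i + 1) / q ^ 2) = qres F q (i - 1) := by
  cases i with
  | zero =>
    rw [qres_eq_residue, ← residue_inv]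
    congr 1
    field_simp
    ring
  | succ i =>
    rw [qres_eq_residue]
    congr 1
    field_simp
    rw [Nat.add_sub_cancel]
    ring

theorem residue_pow_mul_sq (q : F) (i : ℕ) :
    residue q (q ^ (2 * i + 1) * q ^ 2) = qres F q (i + 1) := by
  rw [qres_eq_residue, ← pow_add]
  congr 2

/-- At the upper end of `I` the sequence `q(i)` either stops moving or turns back, according to
`q ^ 2 = 1` or `q ^ (4 * i + 2) = 1`. -/
theorem exists_memI_qres_succ_eq (hq : GoodParam F (q ^ 2)) {i : ℕ} (hi : memI F q i) :
    ∃ i', memI F q i' ∧ qres F q (i + 1) = qres F q i' := by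
  have hq0 : q ≠ 0 := by simpa using hq.1
  by_cases hq2 : q ^ 2 = 1
  · exact ⟨i, hi, by rw [← residue_pow_mul_sq, hq2, mul_one, qres_eq_residue]⟩
  by_cases hsucc : memI F q (i + 1)
  · exact ⟨i + 1, hsucc, rfl⟩
  obtain ⟨h, ⟨hpos, hsum, hmin⟩, hlt, hle⟩ :
      ∃ h, qcharEq F q h ∧ h < 2 * (i + 1) + 1 ∧ 2 * i + 1 ≤ h := by
    simp only [memI, not_forall, not_le] at hsucc
    obtain ⟨h, hh, hlt⟩ := hsucc
    exact ⟨h, hh, hlt, hi h hh⟩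
  have hqh := (sum_quantum_eq_zero_iff hq0 hq2 h).1 hsum
  obtain rfl | rfl : h = 2 * i + 1 ∨ h = 2 * (i + 1) := by omega
  · refine ⟨i - 1, memI_mono i.pred_le hi, ?_⟩
    rw [← residue_pow_mul_sq, ← residue_pow_div_sq hq0, ← residue_inv]
    congr 1
    rw [inv_eq_iff_eq_inv]
    field_simp
    linear_combination hqh
  · have pow_half : q ^ (2 * (i + 1)) = 1 := by
      rw [pow_mul] at hqh ⊢
      exact hq.pow_eq_one_of_pow_two_mul hqh
    exact absurd ((sum_quantum_eq_zero_iff hq0 hq2 (i + 1)).2 pow_half)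
      (hmin (i + 1) (by omega) (by omega))

theorem exists_memI_eq_qres (hs : q + q⁻¹ ≠ 0) (hq : GoodParam F (q ^ 2)) {i : ℕ}
    (hi : memI F q i) {lam : F}
    (h : (qres F q i - lam) ^ 2 = (q - q⁻¹) ^ 2 * (qres F q i * lam - 4)) :
    ∃ i', memI F q i' ∧ lam = qres F q i' := by
  have hq0 : q ≠ 0 := by simpa using hq.1
  rw [qres_eq_residue] at h
  rcases eq_residue_mul_sq_or_div_sq hs (pow_ne_zero _ hq0) h with rfl | rfl
  · rw [residue_pow_mul_sq]
    exact exists_memI_qres_succ_eq hq hi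
  · exact ⟨i - 1, memI_mono i.pred_le hi, residue_pow_div_sq hq0 i⟩

end Residues

section Spread

theorem forall_iff_of_lo_iff_hi {n : ℕ} {P : Fin n → Prop}
    (h : ∀ i : Fin (n - 1), P (lo i) ↔ P (hi i)) (j k : Fin n) : P j ↔ P k := by
  have iff_zero (m : ℕ) (hm : m < n) : P ⟨m, hm⟩ ↔ P ⟨0, by omega⟩ := by
    induction m with
    | zero => rfl
    | succ m ih => exact (h ⟨m, by omega⟩).symm.trans (ih (by omega))
  exact (iff_zero j j.2).trans (iff_zero k k.2).symm

variable {F} {q : F} {M : Type*} [AddCommGroup M] [Module F M]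

/-- Integrality of an operator `f` (for `f = X_j + X_j⁻¹`, the defining condition of the integral
modules of Brundan–Kleshchev): its eigenvalues are among the `q(i)` with `i ∈ I`. -/
def HasIntegralEigenvalues (q : F) (f : Module.End F M) : Prop :=
  ∀ lam, f.HasEigenvalue lam → ∃ i, memI F q i ∧ lam = qres F q i

theorem hasIntegralEigenvalues_iff_ker {f : Module.End F M} :
    HasIntegralEigenvalues q f ↔ ∀ lam : F,
      LinearMap.ker (f - lam • (1 : Module.End F M)) ≠ ⊥ → ∃ i, memI F q i ∧ lam = qres F q i := by
  simp only [HasIntegralEigenvalues, Module.End.hasEigenvalue_iff, Module.End.eigenspace_def]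

variable [IsAlgClosed F] [FiniteDimensional F M] (hs : q + q⁻¹ ≠ 0) (hq : GoodParam F (q ^ 2))
include hs hq

theorem HasIntegralEigenvalues.of_semiconjBy {f g φ : Module.End F M}
    (hf : HasIntegralEigenvalues q f) (hfg : Commute f g) (hφ : SemiconjBy φ g f)
    (hsq : φ ^ 2 = (q - q⁻¹) ^ 2 • (f * g - 4) - (f - g) ^ 2) : HasIntegralEigenvalues q g := by
  intro lam hlam
  rcases hasEigenvalue_or_exists_quadratic hfg hφ hsq hlam with hlam | ⟨ν, hν, hquad⟩
  · exact hf lam hlam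
  · obtain ⟨i, hi, rfl⟩ := hf ν hν
    exact exists_memI_eq_qres hs hq hi hquad

theorem hasIntegralEigenvalues_iff_of_semiconjBy {f g φ : Module.End F M} (hfg : Commute f g)
    (hφg : SemiconjBy φ g f) (hφf : SemiconjBy φ f g)
    (hsq : φ ^ 2 = (q - q⁻¹) ^ 2 • (f * g - 4) - (f - g) ^ 2) :
    HasIntegralEigenvalues q f ↔ HasIntegralEigenvalues q g :=
  ⟨fun hf => hf.of_semiconjBy hs hq hfg hφg hsq,
    fun hg => hg.of_semiconjBy hs hq hfg.symm hφf
      (by rw [hsq, hfg.eq, ← neg_sub f g, neg_sq])⟩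

theorem hasIntegralEigenvalues_lo_iff_hi {n : ℕ} (ρ : H F q n →ₐ[F] Module.End F M)
    (i : Fin (n - 1)) :
    HasIntegralEigenvalues q (ρ (X F q (lo i) + Xinv F q (lo i))) ↔
      HasIntegralEigenvalues q (ρ (X F q (hi i) + Xinv F q (hi i))) := by
  have h := rankTwoRelations q i
  have hsq := congrArg ρ h.intertwiner_sq
  simp only [map_sub, map_mul, map_pow, map_smul, map_ofNat] at hsq
  exact hasIntegralEigenvalues_iff_of_semiconjBy hs hq (h.commute_addInv.map ρ)
    (h.intertwiner_semiconjBy_addInv_y.map ρ) (h.intertwiner_semiconjBy_addInv_x.map ρ) hsq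

theorem eigenvalues_spread_general {n : ℕ} (ρ : H F q n →ₐ[F] Module.End F M) (j : Fin n)
    (hj : HasIntegralEigenvalues q (ρ (X F q j + Xinv F q j))) (k : Fin n) :
    HasIntegralEigenvalues q (ρ (X F q k + Xinv F q k)) :=
  (forall_iff_of_lo_iff_hi (P := fun k => HasIntegralEigenvalues q (ρ (X F q k + Xinv F q k)))
    (hasIntegralEigenvalues_lo_iff_hi hs hq ρ) j k).1 hj

end Spread

/-- **Eigenvalues of the `X_k + X_k⁻¹` on a finite-dimensional module** (Lemma
`L210900` of Brundan–Kleshchev): if, on a finite-dimensional `H_n`-module `M`, every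
eigenvalue of `X_j + X_j⁻¹` is of the form `q(i)` with `i ∈ I`, then the same holds
for every `X_k + X_k⁻¹`, `k = 1, …, n`. -/
theorem eigenvalues_spread
    (F : Type) [Field F] [IsAlgClosed F] (h2 : (2 : F) ≠ 0)
    (q : F) (hq : GoodParam F q) (n : ℕ)
    (M : Type) [AddCommGroup M] [Module F M] [FiniteDimensional F M]
    (ρ : H F q n →ₐ[F] Module.End F M) (j : Fin n)
    (hj : ∀ lam : F,
      LinearMap.ker (ρ (X F q j + Xinv F q j) - lam • (1 : Module.End F M)) ≠ ⊥ →
        ∃ i : ℕ, memI F q i ∧ lam = qres F q i) :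
    ∀ (k : Fin n) (lam : F),
      LinearMap.ker (ρ (X F q k + Xinv F q k) - lam • (1 : Module.End F M)) ≠ ⊥ →
        ∃ i : ℕ, memI F q i ∧ lam = qres F q i :=
  fun k => hasIntegralEigenvalues_iff_ker.1 <| eigenvalues_spread_general
    (hq.add_inv_ne_zero h2) hq.sq ρ j (hasIntegralEigenvalues_iff_ker.2 hj) k

end HC
end
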